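/- arXiv:1110.6884 — 2 statements merged into one kernel-verified Lean document; each statement's English description precedes it below -/
import Mathlib

section
/- Let π be a permutation of [n] avoiding the barred pattern 2̄4135̄, let m be the position of the maximum entry n, and suppose the value b occurs at a position after m. Then there is no pair of positions i < j < m with π(j) < b < π(i); that is, no inversion among the entries occurring before n spans the value b. -/
/-- A permutation of [n] avoids the barred pattern 2̄4135̄: every 413-pattern
(positions i<j<k with π j < π k < π i) extends to a 24135-pattern. -/
def Avoids24135 {n : ℕ} (π : Equiv.Perm (Fin n)) : Prop :=
  ∀ i j k : Fin n, i < j → j < k → π j < π k → π k < π i →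
    ∃ h l : Fin n, h < i ∧ k < l ∧ π j < π h ∧ π h < π k ∧ π i < π l

/-- A permutation of [n] avoids the barred pattern 2̄413: every 413-pattern
extends to a 2413-pattern. -/
def Avoids2413 {n : ℕ} (π : Equiv.Perm (Fin n)) : Prop :=
  ∀ i j k : Fin n, i < j → j < k → π j < π k → π k < π i →
    ∃ h : Fin n, h < i ∧ π j < π h ∧ π h < π k

/-- The Bell number `bell m`: the number of set partitions of an m-element set. -/
noncomputable def bell (m : ℕ) : ℕ := Nat.card (Finpartition (Finset.univ : Finset (Fin m)))

/-- The number of 2̄4135̄-avoiding permutations of [n]. -/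
noncomputable def avoidCount (n : ℕ) : ℕ := Nat.card {π : Equiv.Perm (Fin n) // Avoids24135 π}

section Avoids4135

variable {α β : Type*} [PartialOrder α] [LinearOrder β] {f : α → β} {m k : α}

/-- The sequence `f` avoids the barred pattern 4135̄: every 413-pattern extends to a 4135-pattern.
This is the part of the 2̄4135̄ condition that concerns the letter 5̄, stated for functions so that
it applies to arbitrary sequences. -/
def Avoids4135 (f : α → β) : Prop :=
  ∀ ⦃i j k⦄, i < j → j < k → f j < f k → f k < f i → ∃ l, k < l ∧ f i < f l

theorem Avoids24135.avoids4135 {n : ℕ} {π : Equiv.Perm (Fin n)} (h : Avoids24135 π) :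
    Avoids4135 π := by
  intro i j k hij hjk hπjk hπki
  obtain ⟨-, l, -, hkl, -, -, hπil⟩ := h i j k hij hjk hπjk hπki
  exact ⟨l, hkl, hπil⟩

theorem Avoids4135.antitoneOn_Ioi (h : Avoids4135 f) (hm : ∀ l, m < l → f l < f m) :
    AntitoneOn f (Set.Ioi m) := by
  intro k hmk l hml hkl
  by_contra! hasc
  have hkl' : k < l := hkl.lt_of_ne (ne_of_apply_ne f hasc.ne)
  -- An ascent after `m` makes a 413-pattern with `f m` as its 4, leaving no room for a 5.
  obtain ⟨p, hlp, hmp⟩ := h hmk hkl' hasc (hm l hml)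
  exact (hm p (hml.trans hlp)).not_gt hmp

theorem stmt5_general (h : Avoids4135 f) (hm : ∀ l, m < l → f l < f m) (hmk : m < k) :
    ¬ ∃ i j, i < j ∧ j < m ∧ f j < f k ∧ f k < f i := by
  rintro ⟨i, j, hij, hjm, hjk, hki⟩
  obtain ⟨l, hkl, hil⟩ := h hij (hjm.trans hmk) hjk hki
  have hlk : f l ≤ f k := h.antitoneOn_Ioi hm hmk (hmk.trans hkl) hkl.le
  exact (hki.trans hil).not_ge hlk

end Avoids4135

/-- In a 2̄4135̄-avoiding permutation, if the value b occurs after the maximum, then no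
inversion before the maximum spans b. -/
theorem stmt5 {n : ℕ} (π : Equiv.Perm (Fin n)) (h : Avoids24135 π)
    (m : Fin n) (hm : ∀ i, π i ≤ π m) (b : Fin n) (hb : m < π.symm b) :
    ¬ ∃ i j : Fin n, i < j ∧ j < m ∧ π j < b ∧ b < π i := by
  have hmax : ∀ l, m < l → π l < π m := fun l hml => (hm l).lt_of_ne (π.injective.ne hml.ne')
  simpa only [Equiv.apply_symm_apply] using stmt5_general h.avoids4135 hmax hb
end

section
/- Let π be a permutation of [n] and let m be the position of the maximum entry n. Then π avoids the barred pattern 2̄4135̄ if and only if all three of the following hold: (1) the entries after position m are strictly decreasing; (2) whenever i < j < m with π(i) > π(j), every value b with π(j) ≤ b ≤ π(i) occurs at a position before m; and (3) for every maximal interval of integers I ⊆ [n−1] all of whose values occur before position m, the subsequence of π consisting of the entries with values in I, after standardizing, avoids the barred pattern 2̄413. -/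
/-- The subsequence of π consisting of entries with values in S avoids the barred
pattern 2̄413 (stated directly on relative order, which is what standardization
preserves). -/
def AvoidsIn2413 {n : ℕ} (π : Equiv.Perm (Fin n)) (S : Set (Fin n)) : Prop :=
  ∀ i j k : Fin n, π i ∈ S → π j ∈ S → π k ∈ S → i < j → j < k →
    π j < π k → π k < π i →
      ∃ h : Fin n, π h ∈ S ∧ h < i ∧ π j < π h ∧ π h < π k

open Set Function

variable {α β : Type*}

/-- Avoidance of the barred pattern 2̄4135̄ by a sequence `f` with entries in `β`, indexed by an
arbitrary ordered type `α`; this is `Avoids24135` when `f` is a permutation of `Fin n`. -/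
def AvoidsBarred24135 [LT α] [LT β] (f : α → β) : Prop :=
  ∀ i j k : α, i < j → j < k → f j < f k → f k < f i →
    ∃ h l : α, h < i ∧ k < l ∧ f j < f h ∧ f h < f k ∧ f i < f l

/-- Avoidance of the barred pattern 2̄413 by the subsequence of `f` formed by the entries with value
in `S`; this is `AvoidsIn2413` when `f` is a permutation of `Fin n`. -/
def AvoidsBarred2413On [LT α] [LT β] (f : α → β) (S : Set β) : Prop :=
  ∀ i j k : α, f i ∈ S → f j ∈ S → f k ∈ S → i < j → j < k → f j < f k → f k < f i →
    ∃ h : α, f h ∈ S ∧ h < i ∧ f j < f h ∧ f h < f k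

theorem AvoidsBarred24135.avoidsBarred2413On [LT α] [Preorder β] {f : α → β} {S : Set β}
    (hf : AvoidsBarred24135 f) (hS : S.OrdConnected) : AvoidsBarred2413On f S := by
  intro i j k _ hj hk hij hjk hfjk hfki
  obtain ⟨h, _, hhi, _, hfjh, hfhk, _⟩ := hf i j k hij hjk hfjk hfki
  exact ⟨h, hS.out hj hk ⟨hfjh.le, hfhk.le⟩, hhi, hfjh, hfhk⟩

theorem AvoidsBarred24135.strictAntiOn_Ioi [Preorder α] [LinearOrder β] {f : α → β} {m : α}
    (hf : AvoidsBarred24135 f) (hinj : Injective f) (hm : ∀ i, f i ≤ f m) :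
    StrictAntiOn f (Ioi m) := by
  intro i hmi j hmj hij
  by_contra! hle
  have hfij : f i < f j := hle.lt_of_ne (hinj.ne hij.ne)
  have hfjm : f j < f m := (hm j).lt_of_ne (hinj.ne (mem_Ioi.1 hmj).ne')
  obtain ⟨_, l, _, _, _, _, hml⟩ := hf m i j hmi hij hfij hfjm
  exact hml.not_ge (hm l)

theorem AvoidsBarred24135.Icc_subset_kernImage_Iio [LinearOrder α] [LinearOrder β] {f : α → β}
    {i j m : α} (hf : AvoidsBarred24135 f) (hinj : Injective f) (hm : ∀ i, f i ≤ f m)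
    (hij : i < j) (hjm : j < m) : Icc (f j) (f i) ⊆ kernImage f (Iio m) := by
  rintro _ ⟨hfjk, hfki⟩ k rfl
  by_contra hk
  have hmk : m ≤ k := not_lt.1 hk
  have hjk : j < k := hjm.trans_le hmk
  have hfki' : f k < f i := hfki.lt_of_ne (hinj.ne (hij.trans hjk).ne')
  have hmk' : m < k := hmk.lt_of_ne fun h => (hm i).not_gt (h ▸ hfki')
  obtain ⟨_, l, _, hkl, _, _, hfil⟩ :=
    hf i j k hij hjk (hfjk.lt_of_ne (hinj.ne hjk.ne)) hfki'
  have hflk : f l < f k := hf.strictAntiOn_Ioi hinj hm hmk' (hmk'.trans hkl) hkl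
  exact (hfil.trans hflk).not_gt hfki'

theorem lt_of_strictAntiOn_Ioi [LinearOrder α] [Preorder β] {f : α → β} {j k m : α}
    (hanti : StrictAntiOn f (Ioi m)) (hm : ∀ i, f i ≤ f m) (hjk : j < k) (hfjk : f j < f k) :
    j < m := by
  by_contra! hmj
  rcases hmj.eq_or_lt with rfl | hmj
  · exact hfjk.not_ge (hm k)
  · exact hfjk.not_gt (hanti hmj (hmj.trans hjk) hjk)

theorem kernImage_equiv (e : α ≃ β) (s : Set α) : kernImage e s = e.symm ⁻¹' s := by
  rw [kernImage_eq_compl, e.image_compl, compl_compl, e.image_eq_preimage_symm]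

theorem strictAntiOn_Ioi_iff [Preorder α] [Preorder β] {f : α → β} {m : α} :
    StrictAntiOn f (Ioi m) ↔ ∀ i j, m < i → i < j → f j < f i :=
  ⟨fun hf _ _ hmi hij => hf hmi (hmi.trans hij) hij, fun hf i hmi j _ hij => hf i j hmi hij⟩

theorem maximal_ordConnectedComponent [LinearOrder β] {S : Set β} {x : β} (hx : x ∈ S) :
    Maximal (fun I : Set β => I.OrdConnected ∧ I ⊆ S) (S.ordConnectedComponent x) :=
  ⟨⟨inferInstance, ordConnectedComponent_subset⟩, fun _ ⟨_, hJS⟩ hle =>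
    subset_ordConnectedComponent (hle (self_mem_ordConnectedComponent.2 hx)) hJS⟩

theorem AvoidsBarred24135.of_strictAntiOn_Ioi_of_maximal [LinearOrder α] [LinearOrder β]
    {f : α → β} {m : α} (hinj : Injective f) (hm : ∀ i, f i ≤ f m)
    (hanti : StrictAntiOn f (Ioi m))
    (hIcc : ∀ i j, i < j → j < m → f j < f i → Icc (f j) (f i) ⊆ kernImage f (Iio m))
    (hmax : ∀ I, Maximal (fun J : Set β => J.OrdConnected ∧ J ⊆ kernImage f (Iio m)) I →
      AvoidsBarred2413On f I) : AvoidsBarred24135 f := by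
  intro i j k hij hjk hfjk hfki
  have hfji : f j < f i := hfjk.trans hfki
  have hjm : j < m := lt_of_strictAntiOn_Ioi hanti hm hjk hfjk
  have hsub : Icc (f j) (f i) ⊆ kernImage f (Iio m) := hIcc i j hij hjm hfji
  have hkm : k < m := hsub ⟨hfjk.le, hfki.le⟩ rfl
  have hcomp : Icc (f j) (f i) ⊆ (kernImage f (Iio m)).ordConnectedComponent (f j) :=
    subset_ordConnectedComponent (left_mem_Icc.2 hfji.le) hsub
  obtain ⟨h, _, hhi, hfjh, hfhk⟩ :=
    hmax _ (maximal_ordConnectedComponent (hsub (left_mem_Icc.2 hfji.le))) i j k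
      (hcomp (right_mem_Icc.2 hfji.le)) (hcomp (left_mem_Icc.2 hfji.le))
      (hcomp ⟨hfjk.le, hfki.le⟩) hij hjk hfjk hfki
  exact ⟨h, m, hhi, hkm, hfjh, hfhk, (hm i).lt_of_ne (hinj.ne (hij.trans hjm).ne)⟩

-- `kernImage f (Iio m)` is the set of values not occurring at `m` or later; when `f` is surjective
-- these are the values occurring before `m`.
theorem stmt9_general [LinearOrder α] [LinearOrder β] {f : α → β} (hinj : Injective f) {m : α}
    (hm : ∀ i, f i ≤ f m) :
    AvoidsBarred24135 f ↔
      StrictAntiOn f (Ioi m) ∧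
      (∀ i j, i < j → j < m → f j < f i → Icc (f j) (f i) ⊆ kernImage f (Iio m)) ∧
      ∀ I, Maximal (fun J : Set β => J.OrdConnected ∧ J ⊆ kernImage f (Iio m)) I →
        AvoidsBarred2413On f I :=
  ⟨fun hf => ⟨hf.strictAntiOn_Ioi hinj hm,
      fun _ _ hij hjm _ => hf.Icc_subset_kernImage_Iio hinj hm hij hjm,
      fun _ hI => hf.avoidsBarred2413On hI.prop.1⟩,
    fun ⟨hanti, hIcc, hmax⟩ =>
      .of_strictAntiOn_Ioi_of_maximal hinj hm hanti hIcc hmax⟩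

/-- Characterization: π avoids 2̄4135̄ iff conditions (1)–(3) hold. -/
theorem stmt9 {n : ℕ} (π : Equiv.Perm (Fin n)) (m : Fin n) (hm : ∀ i, π i ≤ π m) :
    Avoids24135 π ↔
      ((∀ i j : Fin n, m < i → i < j → π j < π i) ∧
       (∀ i j : Fin n, i < j → j < m → π j < π i →
          ∀ b : Fin n, π j ≤ b → b ≤ π i → π.symm b < m) ∧
       (∀ I : Set (Fin n), I.OrdConnected → (∀ v ∈ I, π.symm v < m) →
          (∀ J : Set (Fin n), J.OrdConnected → (∀ v ∈ J, π.symm v < m) → I ⊆ J → J = I) →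
          AvoidsIn2413 π I)) := by
  simpa only [Avoids24135, AvoidsIn2413, AvoidsBarred24135, AvoidsBarred2413On, kernImage_equiv,
    strictAntiOn_Ioi_iff, maximal_iff, and_imp, subset_def, mem_Icc, mem_preimage, mem_Iio,
    eq_comm] using stmt9_general π.injective hm
end
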